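/- The unique stationary distribution π'_∞ of P'_∞ is uniform on the Eulerian states of ℛ: there is a constant λ > 0 such that π'_∞(A,v,v) = λ for every v ∈ V and every fully-packed configuration A ∈ F_𝐇, and consequently π'_∞(A,v,v) / Σ_{v'∈V} Σ_{A'∈F_𝐇} π'_∞(A',v',v') = 1/(|V| · |F_𝐇|), i.e. the chain observed on the Eulerian subspace samples the uniform distribution on fully-packed loop configurations. -/

import Mathlib

attribute [local instance] Classical.propDecidable

namespace FPL

/-- Vertices of the brick-wall honeycomb lattice with periodic boundary conditions. -/
abbrev Vtx (m n : ℕ) := ZMod m × ZMod n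

/-- Adjacency on the brick-wall honeycomb lattice: horizontal edges between `(i,j)` and
`(i+1,j)`, and vertical edges between `(i,j)` and `(i,j+1)` whenever `i+j` is even. -/
def HoneyAdj (m n : ℕ) (x y : Vtx m n) : Prop :=
  (x.2 = y.2 ∧ (y.1 = x.1 + 1 ∨ x.1 = y.1 + 1)) ∨
  (x.1 = y.1 ∧ ((y.2 = x.2 + 1 ∧ Even (x.1.val + x.2.val)) ∨
                (x.2 = y.2 + 1 ∧ Even (y.1.val + y.2.val))))

variable (m n : ℕ) [NeZero m] [NeZero n]

/-- The edge set of the brick-wall honeycomb lattice. -/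
noncomputable def honeyEdges : Finset (Sym2 (Vtx m n)) :=
  Finset.image (fun p : Vtx m n × Vtx m n => s(p.1, p.2))
    (Finset.univ.filter fun p => HoneyAdj m n p.1 p.2)

/-- `bdeg m n A x` is the degree of the vertex `x` in the spanning subgraph `(V, A)`. -/
noncomputable def bdeg (A : Finset (Sym2 (Vtx m n))) (x : Vtx m n) : ℕ :=
  (A.filter fun e => x ∈ e).card

/-- `(A,u,v)` is a state of the worm chain: `A ⊆ E`, and the set of odd-degree vertices of
`(V,A)` is `{u,v}` if `u ≠ v`, and is empty if `u = v`. -/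
def IsWormState (A : Finset (Sym2 (Vtx m n))) (u v : Vtx m n) : Prop :=
  A ⊆ honeyEdges m n ∧ ∀ x, (Odd (bdeg m n A x) ↔ ((x = u ∨ x = v) ∧ u ≠ v))

/-- The worm state space `𝒮`. -/
abbrev WormState := {p : Finset (Sym2 (Vtx m n)) × Vtx m n × Vtx m n //
  IsWormState m n p.1 p.2.1 p.2.2}

/-- The set `ℛ` of states with no isolated vertices. -/
def FullSupport (st : WormState m n) : Prop := ∀ x : Vtx m n, bdeg m n st.1.1 x ≠ 0

/-- The fully-packed worm transition matrix `P'_∞`. -/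
noncomputable def Pinf : Matrix (WormState m n) (WormState m n) ℝ := fun st tt =>
  if st.1.2.1 = st.1.2.2 then
    (if tt = st then (bdeg m n st.1.1 st.1.2.2 : ℝ) / 3 else 0) +
    (if ∃ v' : Vtx m n, HoneyAdj m n st.1.2.2 v' ∧ s(st.1.2.2, v') ∉ st.1.1 ∧
        tt.1.1 = insert s(st.1.2.2, v') st.1.1 ∧
        ((tt.1.2.1 = v' ∧ tt.1.2.2 = st.1.2.2) ∨ (tt.1.2.1 = st.1.2.2 ∧ tt.1.2.2 = v'))
      then 1/6 else 0)
  else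
    (if bdeg m n st.1.1 st.1.2.1 = 3 ∧ ∃ u' : Vtx m n, HoneyAdj m n st.1.2.1 u' ∧
        s(st.1.2.1, u') ∈ st.1.1 ∧ tt.1.1 = st.1.1.erase s(st.1.2.1, u') ∧
        tt.1.2.1 = u' ∧ tt.1.2.2 = st.1.2.2 then 1/6 else 0) +
    (if bdeg m n st.1.1 st.1.2.1 = 1 ∧ ∃ u' : Vtx m n, HoneyAdj m n st.1.2.1 u' ∧
        s(st.1.2.1, u') ∉ st.1.1 ∧ tt.1.1 = insert s(st.1.2.1, u') st.1.1 ∧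
        tt.1.2.1 = u' ∧ tt.1.2.2 = st.1.2.2 then 1/4 else 0) +
    (if bdeg m n st.1.1 st.1.2.2 = 3 ∧ ∃ v' : Vtx m n, HoneyAdj m n st.1.2.2 v' ∧
        s(st.1.2.2, v') ∈ st.1.1 ∧ tt.1.1 = st.1.1.erase s(st.1.2.2, v') ∧
        tt.1.2.1 = st.1.2.1 ∧ tt.1.2.2 = v' then 1/6 else 0) +
    (if bdeg m n st.1.1 st.1.2.2 = 1 ∧ ∃ v' : Vtx m n, HoneyAdj m n st.1.2.2 v' ∧
        s(st.1.2.2, v') ∉ st.1.1 ∧ tt.1.1 = insert s(st.1.2.2, v') st.1.1 ∧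
        tt.1.2.1 = st.1.2.1 ∧ tt.1.2.2 = v' then 1/4 else 0)

/-- `st → tt`: some power of `P'_∞` has positive `(st,tt)` entry. -/
def Reaches (st tt : WormState m n) : Prop := ∃ k : ℕ, 0 < (Pinf m n ^ k) st tt

/-- `st ↔ tt`: mutual reachability. -/
def Comm (st tt : WormState m n) : Prop := Reaches m n st tt ∧ Reaches m n tt st

/-- The fully-packed configuration consisting of all horizontal edges. -/
noncomputable def Hconfig : Finset (Sym2 (Vtx m n)) :=
  Finset.image (fun p : Vtx m n => s(p, (p.1 + 1, p.2))) Finset.univ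

/-!
Write `P` for the transition matrix. Its rows sum to at most one, so any nonnegative `μ` with
`μ ≤ μ P` satisfies `μ P = μ`, and if moreover every state leads to a fixed state `s₀` with
`μ s₀ ≠ 0`, then every invariant vector is a multiple of `μ`. It thus suffices to guess such a `μ`
which is constant on the merged states with a fully-packed edge set.

The guess depends only on the degrees of the two defects and on whether they are adjacent. The
inequality `μ ≤ μ P` is local, except that it needs defects of degrees 1 and 3 not to be adjacent:
counting the edges of the configuration from both colour classes of the bipartite lattice shows
that two such defects have the same colour.

For the reachability of a merged state with fully-packed edge set `H`, move from an arbitrary state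
to one whose edge set `A` is as close to `H` as possible. There the defects are merged and `A`
agrees with `H` around them, for otherwise a defect could cross an edge of `A ∆ H`. Merged defects
can then travel to any neighbour without altering `A`, hence to every vertex, so that `A = H`.
-/

section Kernel

open Finset
open scoped Matrix

variable {S : Type*} [Fintype S] {P : Matrix S S ℝ} {μ δ ν : S → ℝ}

lemma sum_vecMul_le (hμ : 0 ≤ μ) (hrow : ∀ s, ∑ t, P s t ≤ 1) :
    ∑ t, (μ ᵥ* P) t ≤ ∑ s, μ s := by
  simp only [Matrix.vecMul, dotProduct]
  rw [sum_comm]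
  refine sum_le_sum fun s _ => ?_
  rw [← mul_sum]
  exact mul_le_of_le_one_right (hμ s) (hrow s)

lemma vecMul_eq_of_le_vecMul (hrow : ∀ s, ∑ t, P s t ≤ 1) (hμ : 0 ≤ μ) (hle : μ ≤ μ ᵥ* P) :
    μ ᵥ* P = μ := by
  have hsum : ∑ s, μ s = ∑ s, (μ ᵥ* P) s :=
    (sum_le_sum fun s _ => hle s).antisymm (sum_vecMul_le hμ hrow)
  exact funext fun s => ((sum_eq_sum_iff_of_le fun s _ => hle s).1 hsum s (mem_univ s)).symm

lemma vecMul_abs_eq (hP : ∀ s t, 0 ≤ P s t) (hrow : ∀ s, ∑ t, P s t ≤ 1) (hδ : δ ᵥ* P = δ) :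
    |δ| ᵥ* P = |δ| := by
  refine vecMul_eq_of_le_vecMul hrow (abs_nonneg δ) fun t => ?_
  calc |δ t| = |∑ s, δ s * P s t| := congrArg abs (congrFun hδ t).symm
    _ ≤ ∑ s, |δ s * P s t| := abs_sum_le_sum_abs _ _
    _ = ∑ s, |δ s| * P s t := by simp only [abs_mul, abs_of_nonneg (hP _ t)]

lemma eq_zero_of_pos_of_vecMul_eq (hP : ∀ s t, 0 ≤ P s t) (hμ : 0 ≤ μ) (hstat : μ ᵥ* P = μ)
    {s t : S} (hst : 0 < P s t) (ht : μ t = 0) : μ s = 0 := by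
  have hsum : ∑ r, μ r * P r t = 0 := (congrFun hstat t).trans ht
  have hterm := (sum_eq_zero_iff_of_nonneg fun r _ => mul_nonneg (hμ r) (hP r t)).1 hsum s
    (mem_univ s)
  exact (mul_eq_zero.1 hterm).resolve_right hst.ne'

lemma eq_zero_of_vecMul_eq (hP : ∀ s t, 0 ≤ P s t) (hrow : ∀ s, ∑ t, P s t ≤ 1) {s₀ : S}
    (hreach : ∀ s, Relation.ReflTransGen (fun s t => 0 < P s t) s s₀)
    (hδ : δ ᵥ* P = δ) (h₀ : δ s₀ = 0) : δ = 0 := by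
  funext s
  refine abs_eq_zero.1 ?_
  induction hreach s using Relation.ReflTransGen.head_induction_on with
  | refl => exact abs_eq_zero.2 h₀
  | head hst _ ih =>
    exact eq_zero_of_pos_of_vecMul_eq hP (abs_nonneg δ) (vecMul_abs_eq hP hrow hδ) hst ih

/- Both vectors being invariant, so is their difference after rescaling to agree at `s₀`; its
absolute value is then invariant as well, and its zero set absorbs every state leading to `s₀`. -/
theorem eq_smul_of_vecMul_eq (hP : ∀ s t, 0 ≤ P s t) (hrow : ∀ s, ∑ t, P s t ≤ 1) {s₀ : S}
    (hreach : ∀ s, Relation.ReflTransGen (fun s t => 0 < P s t) s s₀)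
    (hμ : 0 ≤ μ) (hle : μ ≤ μ ᵥ* P) (h₀ : μ s₀ ≠ 0) (hν : ν ᵥ* P = ν) :
    ν = (ν s₀ / μ s₀) • μ := by
  refine sub_eq_zero.1 (eq_zero_of_vecMul_eq hP hrow hreach ?_ ?_)
  · rw [Matrix.sub_vecMul, Matrix.smul_vecMul, hν, vecMul_eq_of_le_vecMul hrow hμ hle]
  · simp only [Pi.sub_apply, Pi.smul_apply, smul_eq_mul, div_mul_cancel₀ _ h₀, sub_self]

end Kernel

section Degree

open Finset
open scoped symmDiff

variable {V : Type*} [DecidableEq V] {A B E : Finset (Sym2 V)} {e : Sym2 V} {u w x : V}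

/-- The degree of the vertex `x` in the graph with edge set `A`. -/
noncomputable def deg (A : Finset (Sym2 V)) (x : V) : ℕ := (A.filter fun e => x ∈ e).card

/-- The graph with edge set `E` is simple and 3-regular. -/
structure IsCubic (E : Finset (Sym2 V)) : Prop where
  loopless : ∀ x, s(x, x) ∉ E
  deg_eq : ∀ x, deg E x = 3

/-- `A` is a fully-packed loop configuration of the graph with edge set `E`. -/
abbrev IsFullyPacked (E A : Finset (Sym2 V)) : Prop := A ⊆ E ∧ ∀ x, deg A x = 2

/-- `c` is the sign function of a bipartition of the graph with edge set `E`. -/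
def IsBipartition (c : V → ℤˣ) (E : Finset (Sym2 V)) : Prop := ∀ x y, s(x, y) ∈ E → c y = -c x

/-- The neighbours of `x` in the graph with edge set `A`, picked among the ends of the edges in `A`
so that `V` may be infinite. -/
noncomputable def nbrs (A : Finset (Sym2 V)) (x : V) : Finset V :=
  (A.biUnion Sym2.toFinset).filter fun w => s(x, w) ∈ A

lemma symmDiff_singleton_of_mem (he : e ∈ A) : A ∆ {e} = A.erase e := by
  rw [symmDiff_of_ge (singleton_subset_iff.2 he), sdiff_singleton_eq_erase]

lemma symmDiff_singleton_of_notMem (he : e ∉ A) : A ∆ {e} = insert e A := by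
  rw [(disjoint_singleton_right.2 he).symmDiff_eq_sup, sup_eq_union, union_comm, insert_eq]

lemma mem_symmDiff_singleton {f : Sym2 V} (hef : f ≠ e) : f ∈ A ∆ {e} ↔ f ∈ A := by
  simp only [mem_symmDiff, mem_singleton, hef, not_false_eq_true, and_true, false_and, or_false]

lemma self_mem_symmDiff_singleton : e ∈ A ∆ {e} ↔ e ∉ A := by
  simp only [mem_symmDiff, mem_singleton, not_true_eq_false, and_false, true_and, false_or]

lemma symmDiff_singleton_subset (hA : A ⊆ E) (he : e ∈ E) : A ∆ {e} ⊆ E :=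
  symmDiff_le_sup.trans (union_subset hA (singleton_subset_iff.2 he))

lemma deg_insert (he : e ∉ A) : deg (insert e A) x = deg A x + if x ∈ e then 1 else 0 := by
  rw [deg, filter_insert]
  split_ifs
  · exact card_insert_of_notMem fun h => he (mem_filter.1 h).1
  · rfl

lemma deg_symmDiff_singleton_of_notMem (he : e ∉ A) (hx : x ∈ e) :
    deg (A ∆ {e}) x = deg A x + 1 := by
  rw [symmDiff_singleton_of_notMem he, deg_insert he, if_pos hx]

lemma deg_symmDiff_singleton_of_mem (he : e ∈ A) (hx : x ∈ e) :
    deg (A ∆ {e}) x + 1 = deg A x := by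
  have h := deg_symmDiff_singleton_of_notMem (A := A ∆ {e})
    (mt self_mem_symmDiff_singleton.1 (not_not_intro he)) hx
  rwa [symmDiff_symmDiff_cancel_right, eq_comm] at h

lemma deg_symmDiff_singleton_of_notMem_edge (hx : x ∉ e) : deg (A ∆ {e}) x = deg A x := by
  refine congrArg card (Finset.ext fun f => ?_)
  simp only [mem_filter]
  exact and_congr_left fun hf => mem_symmDiff_singleton fun h => hx (h ▸ hf)

lemma deg_insert_edge {k : ℕ} (he : e ∉ A) (hx : x ∈ e) (hk : deg A x = k) :
    deg (A ∆ {e}) x = k + 1 := by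
  rw [deg_symmDiff_singleton_of_notMem he hx, hk]

lemma deg_erase_edge {k : ℕ} (he : e ∈ A) (hx : x ∈ e) (hk : deg A x = k + 1) :
    deg (A ∆ {e}) x = k :=
  Nat.succ_inj.1 ((deg_symmDiff_singleton_of_mem he hx).trans hk)

omit [DecidableEq V] in
lemma notMem_edge (hxu : x ≠ u) (hxw : x ≠ w) : x ∉ s(u, w) := fun h =>
  (Sym2.mem_iff.1 h).elim hxu hxw

lemma odd_deg_symmDiff_singleton : Odd (deg (A ∆ {e}) x) ↔ (Odd (deg A x) ↔ x ∉ e) := by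
  by_cases hx : x ∈ e
  · simp only [hx, not_true_eq_false, iff_false]
    by_cases he : e ∈ A
    · rw [← deg_symmDiff_singleton_of_mem he hx, Nat.odd_add_one, not_not]
    · rw [deg_symmDiff_singleton_of_notMem he hx, Nat.odd_add_one]
  · simp only [deg_symmDiff_singleton_of_notMem_edge hx, hx, not_false_eq_true, iff_true]

lemma deg_mono (h : A ⊆ B) : deg A x ≤ deg B x := card_le_card (filter_subset_filter _ h)

lemma deg_sdiff_add (h : A ⊆ E) : deg (E \ A) x + deg A x = deg E x := by
  rw [deg, deg, ← card_union_of_disjoint (disjoint_filter_filter sdiff_disjoint), ← filter_union,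
    sdiff_union_of_subset h, deg]

lemma mem_nbrs : w ∈ nbrs A x ↔ s(x, w) ∈ A := by
  simp only [nbrs, mem_filter, mem_biUnion, Sym2.mem_toFinset, and_iff_right_iff_imp]
  exact fun h => ⟨_, h, Sym2.mem_mk_right x w⟩

lemma card_nbrs (A : Finset (Sym2 V)) (x : V) : #(nbrs A x) = deg A x := by
  rw [deg, ← card_image_of_injective (nbrs A x) (f := fun w => s(x, w)) fun _ _ =>
    Sym2.congr_right.1]
  congr 1
  ext f
  simp only [mem_image, mem_nbrs, mem_filter, Sym2.mem_iff_exists]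
  exact ⟨by rintro ⟨w, hw, rfl⟩; exact ⟨hw, w, rfl⟩, by rintro ⟨hf, w, rfl⟩; exact ⟨w, hf, rfl⟩⟩

lemma nbrs_subset_nbrs (h : A ⊆ B) : nbrs A x ⊆ nbrs B x :=
  fun _ hw => mem_nbrs.2 (h (mem_nbrs.1 hw))

lemma exists_mem_sdiff_of_deg_lt (h : deg A x < deg B x) : ∃ w, s(x, w) ∈ B ∧ s(x, w) ∉ A := by
  rw [← card_nbrs, ← card_nbrs] at h
  obtain ⟨w, hB, hA⟩ := exists_mem_notMem_of_card_lt_card h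
  exact ⟨w, mem_nbrs.1 hB, mt mem_nbrs.2 hA⟩

lemma mem_iff_of_nbrs_subset (h : nbrs A x ⊆ nbrs B x) (hdeg : deg B x ≤ deg A x) :
    s(x, w) ∈ A ↔ s(x, w) ∈ B := by
  rw [← mem_nbrs, ← mem_nbrs, eq_of_subset_of_card_le h (by rwa [card_nbrs, card_nbrs])]

lemma sum_mul_deg_eq_zero [Fintype V] {c : V → ℤˣ} (hc : IsBipartition c E) (hA : A ⊆ E) :
    ∑ x, (c x : ℤ) * deg A x = 0 := by
  induction A using Finset.induction_on with
  | empty => simp only [deg, filter_empty, card_empty, Nat.cast_zero, mul_zero, sum_const_zero]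
  | insert e A he ih =>
    have hedge : ∑ x, (c x : ℤ) * (if x ∈ e then 1 else 0) = 0 := by
      induction e using Sym2.ind with | _ a b =>
      have hab : c b = -c a := hc a b (hA (mem_insert_self _ _))
      have hne : a ≠ b := by rintro rfl; exact units_ne_neg_self _ hab
      have hends : univ.filter (· ∈ s(a, b)) = {a, b} := by
        ext; simp only [Sym2.mem_iff, mem_filter, mem_univ, true_and, mem_insert, mem_singleton]
      simp only [mul_ite, mul_one, mul_zero, ← sum_filter]
      rw [hends, sum_pair hne, hab, Units.val_neg, add_neg_cancel]
    simp only [deg_insert he, Nat.cast_add, Nat.cast_ite, Nat.cast_one, Nat.cast_zero, mul_add,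
      sum_add_distrib, ih ((subset_insert e A).trans hA), hedge, add_zero]

namespace IsCubic

lemma ne_of_mem (hE : IsCubic E) (h : s(x, w) ∈ E) : x ≠ w := by
  rintro rfl; exact hE.loopless x h

lemma deg_le (hE : IsCubic E) (hA : A ⊆ E) (x : V) : deg A x ≤ 3 :=
  (deg_mono hA).trans_eq (hE.deg_eq x)

lemma deg_sdiff (hE : IsCubic E) (hA : A ⊆ E) (x : V) : deg (E \ A) x + deg A x = 3 :=
  (deg_sdiff_add hA).trans (hE.deg_eq x)

lemma mem_of_deg_eq_three (hE : IsCubic E) (hA : A ⊆ E) (hx : deg A x = 3)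
    (hw : s(x, w) ∈ E) : s(x, w) ∈ A :=
  (mem_iff_of_nbrs_subset (nbrs_subset_nbrs hA) (by rw [hx, hE.deg_eq])).2 hw

end IsCubic

end Degree

section Worm

open Finset
open scoped symmDiff

variable {V : Type*} [DecidableEq V] {E A : Finset (Sym2 V)} {u v w x : V}

/-- An edge set together with an ordered pair of defects. -/
abbrev Marked (V : Type*) := Finset (Sym2 V) × V × V

/-- The same edge set with the two defects exchanged. -/
def Marked.swap (p : Marked V) : Marked V := (p.1, p.2.2, p.2.1)

/-- `p` is a state of the worm chain on the graph with edge set `E`. -/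
def IsWorm (E : Finset (Sym2 V)) (p : Marked V) : Prop :=
  p.1 ⊆ E ∧ ∀ x, Odd (deg p.1 x) ↔ ((x = p.2.1 ∨ x = p.2.2) ∧ p.2.1 ≠ p.2.2)

/-- The state space of the worm chain on the graph with edge set `E`. -/
abbrev WormStates (E : Finset (Sym2 V)) := {p : Marked V // IsWorm E p}

/-- The first defect of `p` crosses the edge joining it to `w`, toggling that edge. -/
noncomputable def Marked.cross (p : Marked V) (w : V) : Marked V :=
  (p.1 ∆ {s(p.2.1, w)}, w, p.2.2)

/-- The first defect of `p` may cross the edge joining it to `w`: any edge if it has degree `3`,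
an absent edge otherwise. -/
def CanCross (E : Finset (Sym2 V)) (p : Marked V) (w : V) : Prop :=
  s(p.2.1, w) ∈ E ∧ (deg p.1 p.2.1 = 3 ∨ s(p.2.1, w) ∉ p.1)

/-- `q` results from a move of the first defect of `p`. -/
def DefectMove (E : Finset (Sym2 V)) (p q : Marked V) : Prop := ∃ w, CanCross E p w ∧ q = p.cross w

namespace Marked

omit [DecidableEq V] in
lemma swap_injective : Function.Injective (swap : Marked V → Marked V) := by
  rintro ⟨A, u, v⟩ ⟨B, a, b⟩ h
  simp only [swap, Prod.mk.injEq] at h ⊢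
  tauto

end Marked

namespace IsWorm

variable {p : Marked V}

lemma swap (hp : IsWorm E p) : IsWorm E p.swap :=
  ⟨hp.1, fun x => (hp.2 x).trans (and_congr or_comm ne_comm)⟩

lemma cross (hE : IsCubic E) (hp : IsWorm E p) (hw : s(p.2.1, w) ∈ E) : IsWorm E (p.cross w) := by
  have huw := hE.ne_of_mem hw
  refine ⟨symmDiff_singleton_subset hp.1 hw, fun x => ?_⟩
  simp only [Marked.cross, odd_deg_symmDiff_singleton, hp.2 x, Sym2.mem_iff]
  by_cases hxu : x = p.2.1 <;> by_cases hxw : x = w <;> by_cases hxv : x = p.2.2 <;> grind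

lemma odd_deg_fst (hp : IsWorm E (A, u, v)) (huv : u ≠ v) : Odd (deg A u) :=
  (hp.2 u).2 ⟨Or.inl rfl, huv⟩

lemma deg_fst (hE : IsCubic E) (hp : IsWorm E (A, u, v)) (huv : u ≠ v) :
    deg A u = 1 ∨ deg A u = 3 := by
  have hle := hE.deg_le hp.1 u
  obtain ⟨k, hk⟩ := hp.odd_deg_fst huv
  dsimp only at hle
  omega

lemma even_deg (hp : IsWorm E (A, u, v)) (hx : x = u ∨ x = v → u = v) : Even (deg A x) :=
  Nat.not_odd_iff_even.1 fun h => ((hp.2 x).1 h).2 (hx ((hp.2 x).1 h).1)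

lemma deg_eq_zero_or_two (hE : IsCubic E) (hp : IsWorm E (A, u, v)) (hx : x = u ∨ x = v → u = v) :
    deg A x = 0 ∨ deg A x = 2 := by
  have hle := hE.deg_le hp.1 x
  obtain ⟨k, hk⟩ := hp.even_deg hx
  dsimp only at hle
  omega

end IsWorm

lemma DefectMove.isWorm {p q : Marked V} (hE : IsCubic E) (hp : IsWorm E p)
    (h : DefectMove E p q) : IsWorm E q := by
  obtain ⟨w, hw, rfl⟩ := h
  exact hp.cross hE hw.1

/-- The probability of each available move of the first defect. -/
noncomputable def moveRate (p : Marked V) : ℝ := if deg p.1 p.2.1 = 1 then 1 / 4 else 1 / 6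

/-- The probability that the worm chain passes from `p` to `q` by a move of the first defect. -/
noncomputable def moveProb (E : Finset (Sym2 V)) (p q : Marked V) : ℝ :=
  if DefectMove E p q then moveRate p else 0

lemma moveRate_pos (p : Marked V) : 0 < moveRate p := by
  unfold moveRate; split_ifs <;> norm_num

lemma moveProb_nonneg (E : Finset (Sym2 V)) (p q : Marked V) : 0 ≤ moveProb E p q := by
  unfold moveProb; split_ifs; exacts [(moveRate_pos p).le, le_rfl]

lemma moveProb_pos {p q : Marked V} (h : DefectMove E p q) : 0 < moveProb E p q := by
  rw [moveProb, if_pos h]; exact moveRate_pos p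

/-- The transition matrix of the worm chain: two merged defects stay put with probability
proportional to their common degree, and otherwise either defect moves. -/
noncomputable def wormMatrix (E : Finset (Sym2 V)) : Matrix (WormStates E) (WormStates E) ℝ :=
  fun s t => (if t = s ∧ s.1.2.1 = s.1.2.2 then (deg s.1.1 s.1.2.2 : ℝ) / 3 else 0) +
    moveProb E s.1 t.1 + moveProb E s.1.swap t.1.swap

lemma loopProb_nonneg (s t : WormStates E) :
    0 ≤ if t = s ∧ s.1.2.1 = s.1.2.2 then (deg s.1.1 s.1.2.2 : ℝ) / 3 else 0 := by
  split_ifs <;> positivity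

lemma wormMatrix_nonneg (s t : WormStates E) : 0 ≤ wormMatrix E s t :=
  add_nonneg (add_nonneg (loopProb_nonneg s t) (moveProb_nonneg ..)) (moveProb_nonneg ..)

lemma card_canCross_of_deg_eq_three {p : Marked V} (hE : IsCubic E) (h : deg p.1 p.2.1 = 3) :
    #{w ∈ nbrs E p.2.1 | CanCross E p w} = 3 := by
  rw [filter_true_of_mem fun w hw => ⟨mem_nbrs.1 hw, Or.inl h⟩, card_nbrs, hE.deg_eq]

lemma card_canCross_add {p : Marked V} (hE : IsCubic E) (hp : p.1 ⊆ E) (h : deg p.1 p.2.1 ≠ 3) :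
    #{w ∈ nbrs E p.2.1 | CanCross E p w} + deg p.1 p.2.1 = 3 := by
  have hfilter : (nbrs E p.2.1).filter (CanCross E p) = nbrs (E \ p.1) p.2.1 := by
    ext w
    simp only [CanCross, h, false_or, mem_filter, mem_nbrs, mem_sdiff, and_self_left]
  rw [hfilter, card_nbrs, hE.deg_sdiff hp]

lemma card_canCross_mul_moveRate_le (hE : IsCubic E) (hp : IsWorm E (A, u, v)) :
    #{w ∈ nbrs E u | CanCross E (A, u, v) w} * moveRate (A, u, v) ≤
      1 / 2 - if u = v then (deg A u : ℝ) / 6 else 0 := by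
  have hadd : deg A u ≠ 3 → #{w ∈ nbrs E u | CanCross E (A, u, v) w} + deg A u = 3 :=
    card_canCross_add hE hp.1
  unfold moveRate
  dsimp only
  split_ifs with hu huv huv
  · have := hp.even_deg (x := u) fun _ => huv
    rw [hu] at this
    exact absurd this (by decide)
  · have : #{w ∈ nbrs E u | CanCross E (A, u, v) w} = 2 := by have := hadd (by omega); omega
    rw [this]; norm_num
  · have hdeg := hp.deg_eq_zero_or_two hE (x := u) fun _ => huv
    have : (#{w ∈ nbrs E u | CanCross E (A, u, v) w} : ℝ) + deg A u = 3 := by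
      exact_mod_cast hadd (by omega)
    linarith
  · rw [card_canCross_of_deg_eq_three hE ((hp.deg_fst hE huv).resolve_left hu)]; norm_num

lemma sum_moveProb_le (hE : IsCubic E) (hp : IsWorm E (A, u, v)) {ι : Type*} [Fintype ι]
    {f : ι → Marked V} (hf : Function.Injective f) :
    ∑ i, moveProb E (A, u, v) (f i) ≤ 1 / 2 - if u = v then (deg A u : ℝ) / 6 else 0 := by
  refine le_trans ?_ (card_canCross_mul_moveRate_le hE hp)
  simp only [moveProb, ← sum_filter, sum_const, nsmul_eq_mul]
  refine mul_le_mul_of_nonneg_right (Nat.cast_le.2 ?_) (moveRate_pos _).le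
  refine card_le_card_of_injOn (fun i => (f i).2.1) (fun i hi => ?_) fun i hi j hj hij => hf ?_
  · obtain ⟨w, hw, hi⟩ := (mem_filter.1 hi).2
    dsimp only
    rw [hi]
    exact mem_filter.2 ⟨mem_nbrs.2 hw.1, hw⟩
  · obtain ⟨w, -, hi⟩ := (mem_filter.1 hi).2
    obtain ⟨w', -, hj⟩ := (mem_filter.1 hj).2
    obtain rfl : w = w' := by simpa only [hi, hj, Marked.cross] using hij
    rw [hi, hj]

lemma sum_wormMatrix_le_one [Fintype V] (hE : IsCubic E) (s : WormStates E) :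
    ∑ t, wormMatrix E s t ≤ 1 := by
  obtain ⟨⟨A, u, v⟩, hs⟩ := s
  have hval : Function.Injective (Subtype.val : WormStates E → Marked V) := Subtype.val_injective
  have hfst := sum_moveProb_le hE hs hval
  have hsnd := sum_moveProb_le hE hs.swap (Marked.swap_injective.comp hval)
  simp only [wormMatrix, sum_add_distrib, ite_and, sum_ite_eq', mem_univ, if_true]
  simp only [Marked.swap, Function.comp_apply] at hfst hsnd ⊢
  rcases eq_or_ne u v with rfl | huv
  · rw [if_pos rfl] at hfst hsnd ⊢
    linarith
  · rw [if_neg huv] at hfst ⊢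
    rw [if_neg huv.symm] at hsnd
    linarith

end Worm

section Reachability

open Finset Relation
open scoped symmDiff

variable {V : Type*} [DecidableEq V] {E A H : Finset (Sym2 V)} {e : Sym2 V}
  {p q : Marked V} {u v w x y : V}

/-- `q` results from a move of one of the defects of `p`. -/
def WormStep (E : Finset (Sym2 V)) (p q : Marked V) : Prop :=
  DefectMove E p q ∨ DefectMove E p.swap q.swap

lemma WormStep.fst (h : CanCross E (A, u, v) w) :
    WormStep E (A, u, v) (A ∆ {s(u, w)}, w, v) := Or.inl ⟨w, h, rfl⟩

lemma WormStep.snd (h : CanCross E (A, v, u) w) :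
    WormStep E (A, u, v) (A ∆ {s(v, w)}, u, w) := Or.inr ⟨w, h, rfl⟩

lemma WormStep.isWorm (hE : IsCubic E) (hp : IsWorm E p) (h : WormStep E p q) : IsWorm E q :=
  h.elim (DefectMove.isWorm hE hp) fun h => (h.isWorm hE hp.swap).swap

lemma IsWorm.of_reflTransGen (hE : IsCubic E) (hp : IsWorm E p)
    (h : ReflTransGen (WormStep E) p q) : IsWorm E q := by
  induction h with
  | refl => exact hp
  | tail _ hstep ih => exact hstep.isWorm hE ih

lemma wormMatrix_pos {s t : WormStates E} (h : WormStep E s.1 t.1) : 0 < wormMatrix E s t := by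
  rcases h with h | h
  · exact add_pos_of_pos_of_nonneg (add_pos_of_nonneg_of_pos (loopProb_nonneg s t)
      (moveProb_pos h)) (moveProb_nonneg ..)
  · exact add_pos_of_nonneg_of_pos (add_nonneg (loopProb_nonneg s t) (moveProb_nonneg ..))
      (moveProb_pos h)

lemma reflTransGen_wormMatrix (hE : IsCubic E) {s : WormStates E}
    (h : ReflTransGen (WormStep E) s.1 q) (hq : IsWorm E q) :
    ReflTransGen (fun s t => 0 < wormMatrix E s t) s ⟨q, hq⟩ := by
  induction h with
  | refl => exact ReflTransGen.refl
  | tail hreach hstep ih =>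
    exact (ih (s.2.of_reflTransGen hE hreach)).tail (wormMatrix_pos hstep)

lemma card_symmDiff_singleton_symmDiff_of_mem (he : e ∈ A ∆ H) :
    #((A ∆ {e}) ∆ H) + 1 = #(A ∆ H) := by
  rw [symmDiff_right_comm, symmDiff_singleton_of_mem he, card_erase_add_one he]

lemma card_symmDiff_singleton_symmDiff_of_notMem (he : e ∉ A ∆ H) :
    #((A ∆ {e}) ∆ H) = #(A ∆ H) + 1 := by
  rw [symmDiff_right_comm, symmDiff_singleton_of_notMem he, card_insert_of_notMem he]

/-- Among the states reachable from `p`, none has an edge set closer to `H` than that of `p`. -/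
def IsClosest (E H : Finset (Sym2 V)) (p : Marked V) : Prop :=
  ∀ q, ReflTransGen (WormStep E) p q → #(p.1 ∆ H) ≤ #(q.1 ∆ H)

lemma exists_isClosest (E H : Finset (Sym2 V)) (p : Marked V) :
    ∃ q, ReflTransGen (WormStep E) p q ∧ IsClosest E H q := by
  obtain ⟨q, hq, hmin⟩ := exists_minimalFor_of_wellFoundedLT (ReflTransGen (WormStep E) p)
    (fun q => #(q.1 ∆ H)) ⟨p, .refl⟩
  exact ⟨q, hq, fun r hr => (le_total _ _).elim id (hmin (hq.trans hr))⟩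

lemma IsClosest.of_le (hp : IsClosest E H p) (hpq : ReflTransGen (WormStep E) p q)
    (hle : #(q.1 ∆ H) ≤ #(p.1 ∆ H)) : IsClosest E H q :=
  fun _ hr => hle.trans (hp _ (hpq.trans hr))

lemma IsClosest.notMem_symmDiff (hp : IsClosest E H (A, u, v)) (hw : CanCross E (A, u, v) w) :
    s(u, w) ∉ A ∆ H := fun h => by
  have hcard := card_symmDiff_singleton_symmDiff_of_mem h
  have hle := hp _ (.single (.fst hw))
  dsimp only at hle
  omega

lemma IsClosest.defects_eq (hE : IsCubic E) (hH : IsFullyPacked E H) (hp : IsWorm E (A, u, v))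
    (hc : IsClosest E H (A, u, v)) : u = v := by
  by_contra huv
  rcases hp.deg_fst hE huv with hu | hu
  · obtain ⟨w, hwH, hwA⟩ := exists_mem_sdiff_of_deg_lt (A := A) (B := H) (x := u)
      (by rw [hu, hH.2]; norm_num)
    exact hc.notMem_symmDiff ⟨hH.1 hwH, Or.inr hwA⟩ (mem_symmDiff.2 (Or.inr ⟨hwH, hwA⟩))
  · obtain ⟨w, hwA, hwH⟩ := exists_mem_sdiff_of_deg_lt (A := H) (B := A) (x := u)
      (by rw [hu, hH.2]; norm_num)
    exact hc.notMem_symmDiff ⟨hp.1 hwA, Or.inl hu⟩ (mem_symmDiff.2 (Or.inl ⟨hwA, hwH⟩))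

lemma IsWorm.nbrs_eq_of_subset (hE : IsCubic E) (hH : IsFullyPacked E H)
    (hp : IsWorm E (A, v, v)) (hsub : nbrs H x ⊆ nbrs A x) : nbrs A x = nbrs H x := by
  refine (eq_of_subset_of_card_le hsub ?_).symm
  rw [card_nbrs, card_nbrs, hH.2]
  rcases hp.deg_eq_zero_or_two hE (x := x) fun _ => rfl with h | h <;> omega

lemma IsClosest.nbrs_eq (hE : IsCubic E) (hH : IsFullyPacked E H) (hp : IsWorm E (A, x, x))
    (hc : IsClosest E H (A, x, x)) : nbrs A x = nbrs H x := by
  refine hp.nbrs_eq_of_subset hE hH fun w hw => ?_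
  by_contra hwA
  rw [mem_nbrs] at hw hwA
  exact hc.notMem_symmDiff ⟨hH.1 hw, Or.inr hwA⟩ (mem_symmDiff.2 (Or.inr ⟨hw, hwA⟩))

/- Opening the edge `xy` costs one unit of distance to `H`; an edge of `H` missing at `y` would
win it back while leaving the defects apart. -/
lemma IsClosest.nbrs_eq_of_notMem (hE : IsCubic E) (hH : IsFullyPacked E H)
    (hp : IsWorm E (A, x, x)) (hc : IsClosest E H (A, x, x)) (hxy : s(x, y) ∈ E)
    (hxyH : s(x, y) ∉ H) : nbrs A y = nbrs H y := by
  refine hp.nbrs_eq_of_subset hE hH fun w hw => ?_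
  by_contra hwA
  rw [mem_nbrs] at hw hwA
  have hxyA : s(x, y) ∉ A := by rwa [← mem_nbrs, hc.nbrs_eq hE hH hp, mem_nbrs]
  have hwx : w ≠ x := by rintro rfl; exact hxyH (Sym2.eq_swap ▸ hw)
  have hne : s(y, w) ≠ s(x, y) := fun h => hwx (Sym2.congr_right.1 (h.trans Sym2.eq_swap))
  have hopen : CanCross E (A, x, x) y := ⟨hxy, Or.inr hxyA⟩
  have hmove : CanCross E (A ∆ {s(x, y)}, y, x) w :=
    ⟨hH.1 hw, Or.inr (mt (mem_symmDiff_singleton hne).1 hwA)⟩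
  have hreach := (ReflTransGen.single (WormStep.fst hopen)).tail (.fst hmove)
  have hgain := card_symmDiff_singleton_symmDiff_of_mem (A := A ∆ {s(x, y)}) (H := H)
    (mem_symmDiff.2 (Or.inr ⟨hw, mt (mem_symmDiff_singleton hne).1 hwA⟩))
  have hcost := card_symmDiff_singleton_symmDiff_of_notMem (hc.notMem_symmDiff hopen)
  have hclosest := hc.of_le hreach (by dsimp only; omega)
  exact hwx (hclosest.defects_eq hE hH (hp.of_reflTransGen hE hreach))

lemma deg_eq_of_nbrs_eq (h : nbrs A x = nbrs H x) : deg A x = deg H x := by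
  rw [← card_nbrs, h, card_nbrs]

/-- One of the merged defects crosses the missing edge, the other follows. -/
lemma reflTransGen_of_notMem (hvy : s(v, y) ∈ E) (hvyA : s(v, y) ∉ A)
    (hv : deg A v = 2) : ReflTransGen (WormStep E) (A, v, v) (A, y, y) := by
  have hdeg : deg (A ∆ {s(v, y)}) v = 3 := by
    rw [deg_symmDiff_singleton_of_notMem hvyA (Sym2.mem_mk_left ..), hv]
  have hfollow := WormStep.snd (E := E) (A := A ∆ {s(v, y)}) (u := y) (v := v) (w := y)
    ⟨hvy, Or.inl hdeg⟩
  rw [symmDiff_symmDiff_cancel_right] at hfollow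
  exact (ReflTransGen.single (.fst ⟨hvy, Or.inr hvyA⟩)).tail hfollow

/-- One defect travels to `w`, drawing `vy` and erasing `yw`; the other follows and undoes both. -/
lemma reflTransGen_of_mem (hE : IsCubic E) (hA : A ⊆ E) (hvy : s(v, y) ∈ E) (hvyA : s(v, y) ∉ A)
    (hv : deg A v = 2) (hy : deg A y = 2) (hyw : s(y, w) ∈ A) :
    ReflTransGen (WormStep E) (A, v, v) (A, w, w) := by
  have hne : s(v, y) ≠ s(y, w) := fun h => hvyA (h ▸ hyw)
  have hvw : v ∉ s(y, w) := fun h => by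
    rcases Sym2.mem_iff.1 h with rfl | rfl
    exacts [hE.loopless _ hvy, hvyA (Sym2.eq_swap ▸ hyw)]
  have hy3 : deg (A ∆ {s(v, y)}) y = 3 := by
    rw [deg_symmDiff_singleton_of_notMem hvyA (Sym2.mem_mk_right ..), hy]
  have hv3 : deg (A ∆ {s(v, y)} ∆ {s(y, w)}) v = 3 := by
    rw [deg_symmDiff_singleton_of_notMem_edge hvw,
      deg_symmDiff_singleton_of_notMem hvyA (Sym2.mem_mk_left ..), hv]
  have hsnd := WormStep.snd (E := E) (A := A ∆ {s(v, y)} ∆ {s(y, w)}) (u := w) (v := v) (w := y)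
    ⟨hvy, Or.inl hv3⟩
  rw [symmDiff_right_comm (A ∆ {s(v, y)}), symmDiff_symmDiff_cancel_right] at hsnd
  have hredraw := WormStep.snd (E := E) (A := A ∆ {s(y, w)}) (u := w) (v := y) (w := w)
    ⟨hA hyw, Or.inr (mt self_mem_symmDiff_singleton.1 (not_not_intro hyw))⟩
  rw [symmDiff_symmDiff_cancel_right] at hredraw
  exact (((ReflTransGen.single (.fst ⟨hvy, Or.inr hvyA⟩)).tail
    (.fst ⟨hA hyw, Or.inl hy3⟩)).tail hsnd).tail hredraw

lemma IsClosest.reflTransGen_of_notMem (hE : IsCubic E) (hH : IsFullyPacked E H)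
    (hp : IsWorm E (A, x, x)) (hc : IsClosest E H (A, x, x)) (hxy : s(x, y) ∈ E)
    (hxyH : s(x, y) ∉ H) : ReflTransGen (WormStep E) (A, x, x) (A, y, y) := by
  have hx := hc.nbrs_eq hE hH hp
  refine FPL.reflTransGen_of_notMem hxy ?_ ((deg_eq_of_nbrs_eq hx).trans (hH.2 x))
  rwa [← mem_nbrs, hx, mem_nbrs]

lemma IsClosest.reflTransGen_of_mem (hE : IsCubic E) (hH : IsFullyPacked E H)
    (hp : IsWorm E (A, x, x)) (hc : IsClosest E H (A, x, x)) (hxy : s(x, y) ∈ H) :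
    ReflTransGen (WormStep E) (A, x, x) (A, y, y) := by
  obtain ⟨z, hxz, hxzH⟩ := exists_mem_sdiff_of_deg_lt (A := H) (B := E) (x := x)
    (by rw [hH.2, hE.deg_eq]; norm_num)
  have hx := hc.nbrs_eq hE hH hp
  have hz := hc.nbrs_eq_of_notMem hE hH hp hxz hxzH
  refine (hc.reflTransGen_of_notMem hE hH hp hxz hxzH).trans
    (FPL.reflTransGen_of_mem (y := x) hE hp.1 (Sym2.eq_swap ▸ hxz) ?_
      ((deg_eq_of_nbrs_eq hz).trans (hH.2 z)) ((deg_eq_of_nbrs_eq hx).trans (hH.2 x)) ?_)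
  · rwa [Sym2.eq_swap, ← mem_nbrs, hx, mem_nbrs]
  · rwa [← mem_nbrs, hx, mem_nbrs]

lemma IsClosest.reflTransGen_of_reachable (hE : IsCubic E) (hH : IsFullyPacked E H)
    (hp : IsWorm E (A, x, x)) (hc : IsClosest E H (A, x, x))
    (hxy : (SimpleGraph.fromEdgeSet (E : Set (Sym2 V))).Reachable x y) :
    ReflTransGen (WormStep E) (A, x, x) (A, y, y) := by
  rw [SimpleGraph.reachable_iff_reflTransGen] at hxy
  induction hxy with
  | refl => exact .refl
  | @tail b d _ hbd hreach =>
    have hcb := hc.of_le hreach le_rfl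
    have hpb := hp.of_reflTransGen hE hreach
    have hbdE : s(b, d) ∈ E := ((SimpleGraph.fromEdgeSet_adj _).1 hbd).1
    by_cases hbdH : s(b, d) ∈ H
    · exact hreach.trans (hcb.reflTransGen_of_mem hE hH hpb hbdH)
    · exact hreach.trans (hcb.reflTransGen_of_notMem hE hH hpb hbdE hbdH)

theorem reflTransGen_fullyPacked (hE : IsCubic E)
    (hconn : (SimpleGraph.fromEdgeSet (E : Set (Sym2 V))).Preconnected)
    (hH : IsFullyPacked E H) (hp : IsWorm E p) (v : V) :
    ReflTransGen (WormStep E) p (H, v, v) := by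
  obtain ⟨⟨A, x, y⟩, hreach, hc⟩ := exists_isClosest E H p
  have hq := hp.of_reflTransGen hE hreach
  obtain rfl := hc.defects_eq hE hH hq
  have htour (z : V) := hc.reflTransGen_of_reachable hE hH hq (hconn x z)
  have hAH : A = H := by
    ext e
    induction e using Sym2.ind with | _ a b =>
    rw [← mem_nbrs, (hc.of_le (htour a) le_rfl).nbrs_eq hE hH (hq.of_reflTransGen hE (htour a)),
      mem_nbrs]
  exact hreach.trans (hAH ▸ htour v)

end Reachability

section Weight

open Finset
open scoped symmDiff Matrix

variable {V : Type*} [DecidableEq V] {E A : Finset (Sym2 V)} {e : Sym2 V} {c : V → ℤˣ}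
  {u v w x : V}

/-- Every vertex has an incident edge in `A`. -/
def NoIsolated (A : Finset (Sym2 V)) : Prop := ∀ x, deg A x ≠ 0

lemma NoIsolated.insert_edge (hA : NoIsolated A) (he : e ∉ A) : NoIsolated (A ∆ {e}) := fun x => by
  rw [symmDiff_singleton_of_notMem he]
  exact ((hA x).bot_lt.trans_le (deg_mono (subset_insert e A))).ne'

lemma NoIsolated.erase_edge (hA : NoIsolated A) (he : s(u, w) ∈ A) (hu : 2 ≤ deg A u)
    (hw : 2 ≤ deg A w) : NoIsolated (A ∆ {s(u, w)}) := fun x => by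
  by_cases hx : x ∈ s(u, w)
  · have hdeg := deg_symmDiff_singleton_of_mem he hx
    rcases Sym2.mem_iff.1 hx with rfl | rfl <;> omega
  · rw [deg_symmDiff_singleton_of_notMem_edge hx]
    exact hA x

lemma IsWorm.deg_eq_two (hE : IsCubic E) (hp : IsWorm E (A, u, v)) (hA : NoIsolated A)
    (hx : x = u ∨ x = v → u = v) : deg A x = 2 :=
  (hp.deg_eq_zero_or_two hE hx).resolve_left (hA x)

lemma IsWorm.deg_eq_two_of_ne (hE : IsCubic E) (hp : IsWorm E (A, u, v)) (hA : NoIsolated A)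
    (hxu : x ≠ u) (hxv : x ≠ v) : deg A x = 2 :=
  hp.deg_eq_two hE hA fun h => absurd h (not_or_intro hxu hxv)

/-- A multiple of the stationary distribution of the worm chain. Detailed balance for separated
defects forces a factor `3` at degree `3` and `2` at degree `1`, since `3 * (1 / 6) = 2 * (1 / 4)`.
It fails near merged defects, where the values `18`, `12` and `2` solve the stationarity
equation. -/
noncomputable def weight (E : Finset (Sym2 V)) (p : Marked V) : ℝ :=
  if NoIsolated p.1 then
    if p.2.1 = p.2.2 then 18
    else if deg p.1 p.2.1 = 3 ∧ deg p.1 p.2.2 = 3 then if s(p.2.1, p.2.2) ∈ E then 12 else 9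
    else if deg p.1 p.2.1 = 1 ∧ deg p.1 p.2.2 = 1 then if s(p.2.1, p.2.2) ∈ E \ p.1 then 2 else 4
    else 6
  else 0

lemma weight_nonneg (E : Finset (Sym2 V)) (p : Marked V) : 0 ≤ weight E p := by
  unfold weight; split_ifs <;> norm_num

lemma weight_swap (E : Finset (Sym2 V)) (p : Marked V) : weight E p.swap = weight E p := by
  obtain ⟨A, u, v⟩ := p
  simp only [weight, Marked.swap, eq_comm (a := v), and_comm (b := deg A u = _),
    Sym2.eq_swap (a := v)]

lemma weight_merged (hA : NoIsolated A) : weight E (A, v, v) = 18 := by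
  simp only [weight, hA, if_true]

lemma weight_three_three (hA : NoIsolated A) (huv : u ≠ v) (hu : deg A u = 3) (hv : deg A v = 3) :
    weight E (A, u, v) = if s(u, v) ∈ E then 12 else 9 := by
  simp only [weight, hA, huv, hu, hv, and_self, if_true, if_false]

lemma weight_one_one (hA : NoIsolated A) (huv : u ≠ v) (hu : deg A u = 1) (hv : deg A v = 1) :
    weight E (A, u, v) = if s(u, v) ∈ E \ A then 2 else 4 := by
  simp only [weight, hA, huv, hu, hv, and_self, OfNat.one_ne_ofNat, if_true, if_false]

lemma weight_one_three (hA : NoIsolated A) (huv : u ≠ v) (hu : deg A u = 1) (hv : deg A v = 3) :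
    weight E (A, u, v) = 6 := by
  simp only [weight, hA, huv, hu, hv, OfNat.one_ne_ofNat, OfNat.ofNat_ne_one, false_and,
    and_false, if_true, if_false]

lemma weight_three_one (hA : NoIsolated A) (huv : u ≠ v) (hu : deg A u = 3) (hv : deg A v = 1) :
    weight E (A, u, v) = 6 :=
  (weight_swap E (A, v, u)).trans (weight_one_three hA huv.symm hv hu)

lemma moveRate_of_deg_eq_one (hu : deg A u = 1) : moveRate (A, u, v) = 1 / 4 := if_pos hu

lemma moveRate_of_deg_ne_one (hu : deg A u ≠ 1) : moveRate (A, u, v) = 1 / 6 := if_neg hu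

lemma IsWorm.sign_eq [Finite V] (hE : IsCubic E) (hc : IsBipartition c E)
    (hp : IsWorm E (A, u, v)) (hA : NoIsolated A) (hu : deg A u = 1) (hv : deg A v = 3) :
    c u = c v := by
  cases nonempty_fintype V
  have huv : u ≠ v := by rintro rfl; omega
  have hdeg (x : V) : (deg A x : ℤ) = 2 - (if x = u then 1 else 0) + if x = v then 1 else 0 := by
    split_ifs with hxu hxv hxv
    · exact absurd (hxu.symm.trans hxv) huv
    · rw [hxu, hu]; rfl
    · rw [hxv, hv]; rfl
    · rw [hp.deg_eq_two_of_ne hE hA hxu hxv]; rfl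
  have hsumE := sum_mul_deg_eq_zero hc Subset.rfl
  have hsumA := sum_mul_deg_eq_zero hc hp.1
  simp only [hE.deg_eq, ← sum_mul] at hsumE
  simp only [hdeg, mul_add, mul_sub, sum_add_distrib, sum_sub_distrib, ← sum_mul, mul_ite, mul_one,
    mul_zero, sum_ite_eq', mem_univ, if_true] at hsumA
  exact Units.ext (by push_cast at hsumE; linarith)

lemma IsWorm.notMem_of_deg [Finite V] (hE : IsCubic E) (hc : IsBipartition c E)
    (hp : IsWorm E (A, u, v)) (hA : NoIsolated A) (hu : deg A u = 1) (hv : deg A v = 3) :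
    s(u, v) ∉ E := fun huv =>
  units_ne_neg_self _ ((hp.sign_eq hE hc hA hu hv).trans (hc u v huv))

variable [Fintype V]

/-- The weight entering `q` through moves of the first defect. -/
noncomputable def fstInflow (E : Finset (Sym2 V)) (q : Marked V) : ℝ :=
  ∑ p with IsWorm E p, weight E p * moveProb E p q

lemma fstInflow_nonneg (q : Marked V) : 0 ≤ fstInflow E q :=
  sum_nonneg fun p _ => mul_nonneg (weight_nonneg E p) (moveProb_nonneg E p q)

lemma sum_weight_mul_moveProb (q : Marked V) :
    ∑ s : WormStates E, weight E s.1 * moveProb E s.1 q = fstInflow E q := by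
  rw [fstInflow]
  exact (sum_subtype _ (fun _ => mem_filter_univ _) fun p => weight E p * moveProb E p q).symm

lemma sum_weight_mul_moveProb_swap (q : Marked V) :
    ∑ s : WormStates E, weight E s.1 * moveProb E s.1.swap q = fstInflow E q := by
  rw [← sum_weight_mul_moveProb]
  have hswap : Function.Involutive fun s : WormStates E => (⟨s.1.swap, s.2.swap⟩ : WormStates E) :=
    fun _ => rfl
  refine Fintype.sum_equiv hswap.toPerm _ _ fun s => ?_
  simp only [Function.Involutive.coe_toPerm, weight_swap]

lemma vecMul_wormMatrix (t : WormStates E) :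
    ((fun s : WormStates E => weight E s.1) ᵥ* wormMatrix E) t =
      weight E t.1 * (if t.1.2.1 = t.1.2.2 then (deg t.1.1 t.1.2.2 : ℝ) / 3 else 0) +
        fstInflow E t.1 + fstInflow E t.1.swap := by
  simp only [Matrix.vecMul, dotProduct, wormMatrix, mul_add, sum_add_distrib,
    sum_weight_mul_moveProb, sum_weight_mul_moveProb_swap, ite_and, mul_ite, mul_zero, sum_ite_eq,
    mem_univ, if_true]

/-- The weight entering `(A, u, v)` when the first defect crosses the edge from `w` to `u`. -/
noncomputable def flowFrom (E A : Finset (Sym2 V)) (u v w : V) : ℝ :=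
  weight E (A ∆ {s(u, w)}, w, v) * moveRate (A ∆ {s(u, w)}, w, v)

/- Undoing the move across `uw` that led to `(A, u, v)` is again crossing `uw`. -/
lemma sum_flowFrom_le (hE : IsCubic E) (hp : IsWorm E (A, u, v)) {N : Finset V}
    (hN : ∀ w ∈ N, s(u, w) ∈ E ∧ (s(u, w) ∈ A ∨ deg A w = 2)) :
    ∑ w ∈ N, flowFrom E A u v w ≤ fstInflow E (A, u, v) := by
  have hmove : ∀ w ∈ N, DefectMove E (Marked.cross (A, u, v) w) (A, u, v) := fun w hw => by
    refine ⟨u, ⟨Sym2.eq_swap ▸ (hN w hw).1, ?_⟩, ?_⟩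
    · simp only [Marked.cross, Sym2.eq_swap (a := w), self_mem_symmDiff_singleton, not_not]
      by_cases hA : s(u, w) ∈ A
      · exact Or.inr hA
      · rw [deg_symmDiff_singleton_of_notMem hA (Sym2.mem_mk_right ..),
          (hN w hw).2.resolve_left hA]
        exact Or.inl rfl
    · simp only [Marked.cross, Sym2.eq_swap (a := w), symmDiff_symmDiff_cancel_right]
  calc ∑ w ∈ N, flowFrom E A u v w
      = ∑ w ∈ N, weight E (Marked.cross (A, u, v) w) *
          moveProb E (Marked.cross (A, u, v) w) (A, u, v) :=
        sum_congr rfl fun w hw => by rw [moveProb, if_pos (hmove w hw)]; rfl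
    _ = ∑ p ∈ N.image (Marked.cross (A, u, v)), weight E p * moveProb E p (A, u, v) :=
        Eq.symm <| sum_image (f := fun p => weight E p * moveProb E p (A, u, v))
          fun w _ w' _ h => congrArg (fun p : Marked V => p.2.1) h
    _ ≤ fstInflow E (A, u, v) :=
        sum_le_sum_of_subset_of_nonneg
          (image_subset_iff.2 fun w hw => (mem_filter_univ _).2 (hp.cross hE (hN w hw).1))
          fun p _ _ => mul_nonneg (weight_nonneg E p) (moveProb_nonneg E p _)

end Weight

section SuperStationary

open Finset
open scoped symmDiff Matrix

variable {V : Type*} [DecidableEq V] {E A : Finset (Sym2 V)} {c : V → ℤˣ} {u v w x : V}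

lemma flowFrom_merged_of_mem (hE : IsCubic E) (hA : NoIsolated A) (hdeg : ∀ x, deg A x = 2)
    (hw : s(v, w) ∈ E) (hwA : s(v, w) ∈ A) : flowFrom E A v v w = 1 / 2 := by
  have hdegv : deg (A ∆ {s(v, w)}) v = 1 := deg_erase_edge hwA (Sym2.mem_mk_left ..) (hdeg v)
  have hdegw : deg (A ∆ {s(v, w)}) w = 1 := deg_erase_edge hwA (Sym2.mem_mk_right ..) (hdeg w)
  have hmem : s(w, v) ∈ E \ A ∆ {s(v, w)} := by
    rw [Sym2.eq_swap (a := w), mem_sdiff, self_mem_symmDiff_singleton]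
    exact ⟨hw, not_not_intro hwA⟩
  rw [flowFrom, weight_one_one (hA.erase_edge hwA (hdeg v).ge (hdeg w).ge) (hE.ne_of_mem hw).symm
    hdegw hdegv, moveRate_of_deg_eq_one hdegw, if_pos hmem]
  norm_num

lemma flowFrom_merged_of_notMem (hE : IsCubic E) (hA : NoIsolated A) (hdeg : ∀ x, deg A x = 2)
    (hw : s(v, w) ∈ E) (hwA : s(v, w) ∉ A) : flowFrom E A v v w = 2 := by
  have hdegv : deg (A ∆ {s(v, w)}) v = 3 := deg_insert_edge hwA (Sym2.mem_mk_left ..) (hdeg v)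
  have hdegw : deg (A ∆ {s(v, w)}) w = 3 := deg_insert_edge hwA (Sym2.mem_mk_right ..) (hdeg w)
  rw [flowFrom, weight_three_three (hA.insert_edge hwA) (hE.ne_of_mem hw).symm hdegw hdegv,
    moveRate_of_deg_ne_one (hdegw.trans_ne (by decide)), Sym2.eq_swap, if_pos hw]
  norm_num

lemma flowFrom_three_three (hE : IsCubic E) (hp : IsWorm E (A, u, v)) (hA : NoIsolated A)
    (huv : u ≠ v) (hu : deg A u = 3) (hv : deg A v = 3) (hw : s(u, w) ∈ A) :
    flowFrom E A u v w = 3 / 2 + if w = v then 3 / 2 else 0 := by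
  have huw := hE.ne_of_mem (hp.1 hw)
  rw [flowFrom]
  split_ifs with hwv
  · subst hwv
    have hdegw : deg (A ∆ {s(u, w)}) w = 2 := deg_erase_edge hw (Sym2.mem_mk_right ..) hv
    rw [weight_merged (hA.erase_edge hw (by omega) (by omega)),
      moveRate_of_deg_ne_one (hdegw.trans_ne (by decide))]
    norm_num
  · have hdegw2 : deg A w = 2 := hp.deg_eq_two_of_ne hE hA huw.symm hwv
    have hdegw : deg (A ∆ {s(u, w)}) w = 1 := deg_erase_edge hw (Sym2.mem_mk_right ..) hdegw2
    have hdegv : deg (A ∆ {s(u, w)}) v = 3 :=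
      (deg_symmDiff_singleton_of_notMem_edge (notMem_edge huv.symm (Ne.symm hwv))).trans hv
    rw [weight_one_three (hA.erase_edge hw (by omega) hdegw2.ge) hwv hdegw hdegv,
      moveRate_of_deg_eq_one hdegw]
    norm_num

lemma flowFrom_one_one (hE : IsCubic E) (hp : IsWorm E (A, u, v)) (hA : NoIsolated A)
    (huv : u ≠ v) (hv : deg A v = 1) (hw : s(u, w) ∈ E) (hwA : s(u, w) ∉ A) (hwv : w ≠ v) :
    flowFrom E A u v w = 1 := by
  have hdegw2 : deg A w = 2 := hp.deg_eq_two_of_ne hE hA (hE.ne_of_mem hw).symm hwv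
  have hdegw : deg (A ∆ {s(u, w)}) w = 3 := deg_insert_edge hwA (Sym2.mem_mk_right ..) hdegw2
  have hdegv : deg (A ∆ {s(u, w)}) v = 1 :=
    (deg_symmDiff_singleton_of_notMem_edge (notMem_edge huv.symm hwv.symm)).trans hv
  rw [flowFrom, weight_three_one (hA.insert_edge hwA) hwv hdegw hdegv,
    moveRate_of_deg_ne_one (hdegw.trans_ne (by decide))]
  norm_num

lemma flowFrom_one_three (hE : IsCubic E) (hp : IsWorm E (A, u, v)) (hA : NoIsolated A)
    (huv : u ≠ v) (hv : deg A v = 3) (hw : s(u, w) ∈ E) (hwA : s(u, w) ∉ A) (hwv : w ≠ v) :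
    flowFrom E A u v w = 3 / 2 + if s(w, v) ∈ E then 1 / 2 else 0 := by
  have hdegw2 : deg A w = 2 := hp.deg_eq_two_of_ne hE hA (hE.ne_of_mem hw).symm hwv
  have hdegw : deg (A ∆ {s(u, w)}) w = 3 := deg_insert_edge hwA (Sym2.mem_mk_right ..) hdegw2
  have hdegv : deg (A ∆ {s(u, w)}) v = 3 :=
    (deg_symmDiff_singleton_of_notMem_edge (notMem_edge huv.symm hwv.symm)).trans hv
  rw [flowFrom, weight_three_three (hA.insert_edge hwA) hwv hdegw hdegv,
    moveRate_of_deg_ne_one (hdegw.trans_ne (by decide))]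
  split_ifs <;> norm_num

lemma flowFrom_three_one (hE : IsCubic E) (hp : IsWorm E (A, u, v)) (hA : NoIsolated A)
    (huv : u ≠ v) (hu : deg A u = 3) (hv : deg A v = 1) (hw : s(u, w) ∈ A) (hwv : w ≠ v) :
    flowFrom E A u v w = 1 - if s(w, v) ∈ E \ A then 1 / 2 else 0 := by
  have hdegw2 : deg A w = 2 := hp.deg_eq_two_of_ne hE hA (hE.ne_of_mem (hp.1 hw)).symm hwv
  have hdegw : deg (A ∆ {s(u, w)}) w = 1 := deg_erase_edge hw (Sym2.mem_mk_right ..) hdegw2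
  have hdegv : deg (A ∆ {s(u, w)}) v = 1 :=
    (deg_symmDiff_singleton_of_notMem_edge (notMem_edge huv.symm hwv.symm)).trans hv
  have hne : s(w, v) ≠ s(u, w) := fun h =>
    huv (Sym2.congr_right.1 (h.trans Sym2.eq_swap)).symm
  rw [flowFrom, weight_one_one (hA.erase_edge hw (by omega) hdegw2.ge) hwv hdegw hdegv,
    moveRate_of_deg_eq_one hdegw]
  simp only [mem_sdiff, mem_symmDiff_singleton hne]
  split_ifs <;> norm_num

lemma sum_nbrs_add_sum_nbrs_sdiff {M : Type*} [AddCommMonoid M] (hA : A ⊆ E) (f : V → M) :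
    ∑ w ∈ nbrs A x, f w + ∑ w ∈ nbrs (E \ A) x, f w = ∑ w ∈ nbrs E x, f w := by
  rw [← sum_filter_add_sum_filter_not (nbrs E x) (fun w => s(x, w) ∈ A)]
  congr 2
  · ext w
    simp only [mem_filter, mem_nbrs]
    exact ⟨fun h => ⟨hA h, h⟩, And.right⟩
  · ext w
    simp only [mem_filter, mem_nbrs, mem_sdiff]

section Fintype

variable [Fintype V]

lemma three_le_fstInflow_merged (hE : IsCubic E) (hp : IsWorm E (A, v, v)) (hA : NoIsolated A) :
    3 ≤ fstInflow E (A, v, v) := by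
  have hdeg (x : V) : deg A x = 2 := hp.deg_eq_two hE hA fun _ => rfl
  have hcard : deg (E \ A) v = 1 :=
    Nat.add_right_cancel ((hE.deg_sdiff hp.1 v).trans (by rw [hdeg]))
  calc (3 : ℝ) = deg A v * (1 / 2) + deg (E \ A) v * 2 := by
        rw [hdeg, hcard]; norm_num
    _ = ∑ w ∈ nbrs A v, flowFrom E A v v w + ∑ w ∈ nbrs (E \ A) v, flowFrom E A v v w := by
        rw [sum_congr rfl fun w hw =>
            flowFrom_merged_of_mem hE hA hdeg (hp.1 (mem_nbrs.1 hw)) (mem_nbrs.1 hw),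
          sum_congr rfl fun w hw => flowFrom_merged_of_notMem hE hA hdeg
            (mem_sdiff.1 (mem_nbrs.1 hw)).1 (mem_sdiff.1 (mem_nbrs.1 hw)).2,
          sum_const, sum_const, card_nbrs, card_nbrs, nsmul_eq_mul, nsmul_eq_mul]
    _ = ∑ w ∈ nbrs E v, flowFrom E A v v w := sum_nbrs_add_sum_nbrs_sdiff hp.1 _
    _ ≤ fstInflow E (A, v, v) :=
        sum_flowFrom_le hE hp fun w hw => ⟨mem_nbrs.1 hw, Or.inr (hdeg w)⟩

lemma le_fstInflow_three_three (hE : IsCubic E) (hp : IsWorm E (A, u, v)) (hA : NoIsolated A)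
    (huv : u ≠ v) (hu : deg A u = 3) (hv : deg A v = 3) :
    9 / 2 + (if s(u, v) ∈ E then 3 / 2 else 0) ≤ fstInflow E (A, u, v) := by
  calc (9 / 2 + if s(u, v) ∈ E then 3 / 2 else 0 : ℝ)
      = ∑ w ∈ nbrs E u, (3 / 2 + if w = v then 3 / 2 else 0 : ℝ) := by
        rw [sum_add_distrib, sum_const, card_nbrs, hE.deg_eq, sum_ite_eq']
        simp only [mem_nbrs]
        norm_num
    _ = ∑ w ∈ nbrs E u, flowFrom E A u v w := sum_congr rfl fun w hw =>
        (flowFrom_three_three hE hp hA huv hu hv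
          (hE.mem_of_deg_eq_three hp.1 hu (mem_nbrs.1 hw))).symm
    _ ≤ fstInflow E (A, u, v) := sum_flowFrom_le hE hp fun w hw =>
        ⟨mem_nbrs.1 hw, Or.inl (hE.mem_of_deg_eq_three hp.1 hu (mem_nbrs.1 hw))⟩

lemma le_fstInflow_one_one (hE : IsCubic E) (hp : IsWorm E (A, u, v)) (hA : NoIsolated A)
    (huv : u ≠ v) (hu : deg A u = 1) (hv : deg A v = 1) :
    2 - (if s(u, v) ∈ E \ A then 1 else 0) ≤ fstInflow E (A, u, v) := by
  have hcard : #(nbrs (E \ A) u) = 2 := by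
    rw [card_nbrs]; exact Nat.add_right_cancel ((hE.deg_sdiff hp.1 u).trans (by rw [hu]))
  have hmem {w : V} (hw : w ∈ (nbrs (E \ A) u).erase v) :
      s(u, w) ∈ E ∧ s(u, w) ∉ A ∧ w ≠ v := by
    rw [mem_erase, mem_nbrs, mem_sdiff] at hw
    exact ⟨hw.2.1, hw.2.2, hw.1⟩
  calc (2 - if s(u, v) ∈ E \ A then 1 else 0 : ℝ)
      = #((nbrs (E \ A) u).erase v) := by
        rw [card_erase_eq_ite, hcard]
        simp only [mem_nbrs]
        split_ifs <;> norm_num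
    _ = ∑ w ∈ (nbrs (E \ A) u).erase v, flowFrom E A u v w := by
        rw [sum_congr rfl fun w hw => flowFrom_one_one hE hp hA huv hv (hmem hw).1 (hmem hw).2.1
          (hmem hw).2.2, sum_const, nsmul_one]
    _ ≤ fstInflow E (A, u, v) := sum_flowFrom_le hE hp fun w hw => ⟨(hmem hw).1,
        Or.inr (hp.deg_eq_two_of_ne hE hA (hE.ne_of_mem (hmem hw).1).symm (hmem hw).2.2)⟩

lemma le_fstInflow_one_three (hE : IsCubic E) (hp : IsWorm E (A, u, v)) (hA : NoIsolated A)
    (huv : u ≠ v) (hu : deg A u = 1) (hv : deg A v = 3) :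
    3 + #(nbrs (E \ A) u ∩ nbrs E v) / 2 ≤ fstInflow E (A, u, v) := by
  have hcard : #(nbrs (E \ A) u) = 2 := by
    rw [card_nbrs]; exact Nat.add_right_cancel ((hE.deg_sdiff hp.1 u).trans (by rw [hu]))
  have hmem {w : V} (hw : w ∈ nbrs (E \ A) u) : s(u, w) ∈ E ∧ s(u, w) ∉ A ∧ w ≠ v := by
    rw [mem_nbrs, mem_sdiff] at hw
    refine ⟨hw.1, hw.2, ?_⟩
    rintro rfl
    exact hw.2 (Sym2.eq_swap ▸ hE.mem_of_deg_eq_three hp.1 hv (Sym2.eq_swap ▸ hw.1))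
  calc (3 + #(nbrs (E \ A) u ∩ nbrs E v) / 2 : ℝ)
      = ∑ w ∈ nbrs (E \ A) u, (3 / 2 + if s(w, v) ∈ E then 1 / 2 else 0 : ℝ) := by
        simp only [Sym2.eq_swap (b := v), ← mem_nbrs]
        rw [sum_add_distrib, sum_const, hcard, ← sum_filter, filter_mem_eq_inter, sum_const,
          nsmul_eq_mul, nsmul_eq_mul]
        ring
    _ = ∑ w ∈ nbrs (E \ A) u, flowFrom E A u v w := sum_congr rfl fun w hw =>
        (flowFrom_one_three hE hp hA huv hv (hmem hw).1 (hmem hw).2.1 (hmem hw).2.2).symm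
    _ ≤ fstInflow E (A, u, v) := sum_flowFrom_le hE hp fun w hw => ⟨(hmem hw).1,
        Or.inr (hp.deg_eq_two_of_ne hE hA (hE.ne_of_mem (hmem hw).1).symm (hmem hw).2.2)⟩

lemma le_fstInflow_three_one (hE : IsCubic E) (hp : IsWorm E (A, u, v)) (hA : NoIsolated A)
    (huv : u ≠ v) (hu : deg A u = 3) (hv : deg A v = 1) (huvE : s(u, v) ∉ E) :
    3 - #(nbrs (E \ A) v ∩ nbrs E u) / 2 ≤ fstInflow E (A, u, v) := by
  have hmem {w : V} (hw : w ∈ nbrs E u) : s(u, w) ∈ A ∧ w ≠ v :=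
    ⟨hE.mem_of_deg_eq_three hp.1 hu (mem_nbrs.1 hw), by rintro rfl; exact huvE (mem_nbrs.1 hw)⟩
  calc (3 - #(nbrs (E \ A) v ∩ nbrs E u) / 2 : ℝ)
      = ∑ w ∈ nbrs E u, (1 - if s(w, v) ∈ E \ A then 1 / 2 else 0 : ℝ) := by
        simp only [Sym2.eq_swap (b := v), ← mem_nbrs]
        rw [sum_sub_distrib, sum_const, card_nbrs, hE.deg_eq, ← sum_filter, filter_mem_eq_inter,
          inter_comm, sum_const, nsmul_eq_mul, nsmul_eq_mul]
        ring
    _ = ∑ w ∈ nbrs E u, flowFrom E A u v w := sum_congr rfl fun w hw =>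
        (flowFrom_three_one hE hp hA huv hu hv (hmem hw).1 (hmem hw).2).symm
    _ ≤ fstInflow E (A, u, v) := sum_flowFrom_le hE hp fun w hw =>
        ⟨mem_nbrs.1 hw, Or.inl (hmem hw).1⟩

lemma weight_le_fstInflow_add (hE : IsCubic E) (hc : IsBipartition c E)
    (hp : IsWorm E (A, u, v)) (hA : NoIsolated A) (huv : u ≠ v) :
    weight E (A, u, v) ≤ fstInflow E (A, u, v) + fstInflow E (A, v, u) := by
  have hmixed {u v : V} (hp : IsWorm E (A, u, v)) (huv : u ≠ v) (hu : deg A u = 1)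
      (hv : deg A v = 3) : 6 ≤ fstInflow E (A, u, v) + fstInflow E (A, v, u) := by
    have hnotMem := hp.notMem_of_deg hE hc hA hu hv
    have hfst := le_fstInflow_one_three hE hp hA huv hu hv
    have hsnd := le_fstInflow_three_one hE hp.swap hA huv.symm hv hu (Sym2.eq_swap ▸ hnotMem)
    linarith
  rcases hp.deg_fst hE huv with hu | hu <;> rcases hp.swap.deg_fst hE huv.symm with hv | hv
  · have hfst := le_fstInflow_one_one hE hp hA huv hu hv
    have hsnd := le_fstInflow_one_one hE hp.swap hA huv.symm hv hu
    rw [Sym2.eq_swap] at hsnd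
    rw [weight_one_one hA huv hu hv]
    split_ifs at hfst hsnd ⊢ <;> linarith
  · exact (weight_one_three hA huv hu hv).trans_le (hmixed hp huv hu hv)
  · rw [weight_three_one hA huv hu hv, add_comm]
    exact hmixed hp.swap huv.symm hv hu
  · have hfst := le_fstInflow_three_three hE hp hA huv hu hv
    have hsnd := le_fstInflow_three_three hE hp.swap hA huv.symm hv hu
    rw [Sym2.eq_swap] at hsnd
    rw [weight_three_three hA huv hu hv]
    split_ifs at hfst hsnd ⊢ <;> linarith

theorem weight_le_vecMul (hE : IsCubic E) (hc : IsBipartition c E) :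
    (fun s : WormStates E => weight E s.1) ≤
      (fun s : WormStates E => weight E s.1) ᵥ* wormMatrix E := by
  rintro ⟨⟨A, u, v⟩, hp⟩
  rw [vecMul_wormMatrix]
  simp only [Marked.swap]
  have hfst := fstInflow_nonneg (E := E) (A, u, v)
  have hsnd := fstInflow_nonneg (E := E) (A, v, u)
  by_cases hA : NoIsolated A
  · split_ifs with huv
    · obtain rfl : u = v := huv
      have hin := three_le_fstInflow_merged hE hp hA
      rw [weight_merged hA, hp.deg_eq_two hE hA fun _ => rfl]
      norm_num
      linarith
    · simpa only [mul_zero, zero_add] using weight_le_fstInflow_add hE hc hp hA huv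
  · rw [show weight E (A, u, v) = 0 from if_neg hA]
    linarith

end Fintype

end SuperStationary

section Uniformity

open Finset
open scoped Matrix

variable {V : Type*} [DecidableEq V] {E : Finset (Sym2 V)} {c : V → ℤˣ} {s : WormStates E}

/-- The edge set of `s` is fully packed and its two defects are merged. -/
abbrev IsLoopState (s : WormStates E) : Prop := (∀ x, deg s.1.1 x = 2) ∧ s.1.2.1 = s.1.2.2

lemma IsLoopState.weight_eq (hs : IsLoopState s) : weight E s.1 = 18 := by
  obtain ⟨⟨A, u, v⟩, hp⟩ := s
  obtain rfl : u = v := hs.2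
  exact weight_merged fun x => (hs.1 x).trans_ne two_ne_zero

lemma IsLoopState.reaches (hE : IsCubic E)
    (hconn : (SimpleGraph.fromEdgeSet (E : Set (Sym2 V))).Preconnected) (hs : IsLoopState s)
    (t : WormStates E) : Relation.ReflTransGen (fun s t => 0 < wormMatrix E s t) t s := by
  obtain ⟨⟨A, u, v⟩, hp⟩ := s
  obtain rfl : u = v := hs.2
  exact reflTransGen_wormMatrix hE (reflTransGen_fullyPacked hE hconn ⟨hp.1, hs.1⟩ t.2 u) hp

lemma isWorm_of_isFullyPacked {A : Finset (Sym2 V)} (hA : IsFullyPacked E A) (v : V) :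
    IsWorm E (A, v, v) := by
  refine ⟨hA.1, fun x => iff_of_false ?_ fun h => h.2 rfl⟩
  rw [hA.2]
  decide

variable [Fintype V]

variable (E) in
lemma card_isLoopState :
    #{s : WormStates E | IsLoopState s} = Fintype.card V * #{A | IsFullyPacked E A} := by
  rw [← card_univ, ← card_product]
  refine card_bij' (fun s _ => (s.1.2.1, s.1.1))
    (fun q hq => ⟨(q.2, q.1, q.1),
      isWorm_of_isFullyPacked ((mem_filter_univ _).1 (mem_product.1 hq).2) q.1⟩)
    (fun s hs => ?_) (fun q hq => ?_) (fun s hs => ?_) fun _ _ => rfl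
  · exact mem_product.2 ⟨mem_univ _, (mem_filter_univ _).2 ⟨s.2.1, ((mem_filter_univ _).1 hs).1⟩⟩
  · exact (mem_filter_univ _).2 ⟨((mem_filter_univ _).1 (mem_product.1 hq).2).2, rfl⟩
  · obtain ⟨⟨A, u, v⟩, hp⟩ := s
    obtain rfl : u = v := ((mem_filter_univ _).1 hs).2
    rfl

theorem exists_forall_isLoopState_eq (hE : IsCubic E) (hc : IsBipartition c E)
    (hconn : (SimpleGraph.fromEdgeSet (E : Set (Sym2 V))).Preconnected)
    {ν : WormStates E → ℝ} (hν₀ : ∀ s, 0 ≤ ν s) (hν₁ : ∑ s, ν s = 1)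
    (hstat : ν ᵥ* wormMatrix E = ν) : ∃ lam : ℝ, 0 < lam ∧ ∀ s, IsLoopState s → ν s = lam := by
  by_cases hex : ∃ s : WormStates E, IsLoopState s
  · obtain ⟨s₀, hs₀⟩ := hex
    have hprop : ν = (ν s₀ / weight E s₀.1) • fun s => weight E s.1 :=
      eq_smul_of_vecMul_eq wormMatrix_nonneg (sum_wormMatrix_le_one hE) (hs₀.reaches hE hconn)
        (fun s => weight_nonneg E s.1) (weight_le_vecMul hE hc)
        (by rw [hs₀.weight_eq]; norm_num) hstat
    refine ⟨ν s₀, (hν₀ s₀).lt_of_ne' fun h => ?_, fun s hs => ?_⟩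
    · rw [h, zero_div, zero_smul] at hprop
      simp only [hprop, Pi.zero_apply, sum_const_zero, zero_ne_one] at hν₁
    · calc ν s = ν s₀ / weight E s₀.1 * weight E s.1 := congrFun hprop s
        _ = ν s₀ := by rw [hs₀.weight_eq, hs.weight_eq, div_mul_cancel₀ _ (by norm_num)]
  · exact ⟨1, one_pos, fun s hs => absurd ⟨s, hs⟩ hex⟩

theorem uniform_prop_general (hE : IsCubic E) (hc : IsBipartition c E)
    (hconn : (SimpleGraph.fromEdgeSet (E : Set (Sym2 V))).Preconnected)
    {ν : WormStates E → ℝ} (hν₀ : ∀ s, 0 ≤ ν s) (hν₁ : ∑ s, ν s = 1)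
    (hstat : ν ᵥ* wormMatrix E = ν) :
    ∃ lam : ℝ, 0 < lam ∧ (∀ s, IsLoopState s → ν s = lam) ∧
      ∀ s, IsLoopState s → ν s / ∑ t with IsLoopState t, ν t =
        1 / ((Fintype.card V : ℝ) * (#{A | IsFullyPacked E A} : ℝ)) := by
  obtain ⟨lam, hlam, hν⟩ := exists_forall_isLoopState_eq hE hc hconn hν₀ hν₁ hstat
  refine ⟨lam, hlam, hν, fun s hs => ?_⟩
  rw [sum_congr rfl fun t ht => hν t ((mem_filter_univ t).1 ht), sum_const, nsmul_eq_mul,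
    hν s hs, card_isLoopState, Nat.cast_mul, div_mul_cancel_right₀ hlam.ne', one_div]

end Uniformity

section Honeycomb

open Finset

variable {m n : ℕ}

lemma val_add_one_mod_two {k : ℕ} [NeZero k] (hk : Even k) (a : ZMod k) :
    (a + 1).val % 2 = (a.val + 1) % 2 := by
  rw [ZMod.val_add, ZMod.val_one_eq_one_mod, Nat.mod_mod_of_dvd _ hk.two_dvd, Nat.add_mod,
    Nat.mod_mod_of_dvd _ hk.two_dvd, ← Nat.add_mod]

lemma zmod_induction {k : ℕ} [NeZero k] {p : ZMod k → Prop} (hp : ∀ a, p a → p (a + 1))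
    {a : ZMod k} (ha : p a) (b : ZMod k) : p b := by
  have hadd (i : ℕ) : p (a + i) := by
    induction i with
    | zero => rwa [Nat.cast_zero, add_zero]
    | succ i ih => rw [Nat.cast_succ, ← add_assoc]; exact hp _ ih
  have hb := hadd (b - a).val
  rwa [ZMod.natCast_rightInverse, add_sub_cancel] at hb

lemma HoneyAdj.symm {x y : Vtx m n} : HoneyAdj m n x y → HoneyAdj m n y x
  | .inl ⟨h, h'⟩ => .inl ⟨h.symm, h'.symm⟩
  | .inr ⟨h, h'⟩ => .inr ⟨h.symm, h'.symm⟩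

lemma honeyAdj_right (i : ZMod m) (j : ZMod n) : HoneyAdj m n (i, j) (i + 1, j) :=
  .inl ⟨rfl, .inl rfl⟩

lemma honeyAdj_up {i : ZMod m} {j : ZMod n} (h : Even (i.val + j.val)) :
    HoneyAdj m n (i, j) (i, j + 1) :=
  .inr ⟨rfl, .inl ⟨rfl, h⟩⟩

lemma even_val_add_succ [NeZero n] (hn : Even n) (i : ZMod m) (j : ZMod n) :
    Even (i.val + (j + 1).val) ↔ ¬ Even (i.val + j.val) := by
  have hj := val_add_one_mod_two hn j
  rw [Nat.even_iff, Nat.even_iff]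
  omega

lemma even_val_succ_add [NeZero m] (hm : Even m) (i : ZMod m) (j : ZMod n) :
    Even ((i + 1).val + j.val) ↔ ¬ Even (i.val + j.val) := by
  rw [add_comm, even_val_add_succ hm, add_comm]

variable [NeZero m] [NeZero n]

lemma mem_honeyEdges {x y : Vtx m n} : s(x, y) ∈ honeyEdges m n ↔ HoneyAdj m n x y := by
  simp only [honeyEdges, mem_image, mem_filter, mem_univ, true_and, Sym2.eq_iff]
  constructor
  · rintro ⟨⟨a, b⟩, h, ⟨rfl, rfl⟩ | ⟨rfl, rfl⟩⟩
    exacts [h, h.symm]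
  · exact fun h => ⟨(x, y), h, .inl ⟨rfl, rfl⟩⟩

lemma isBipartition_honeyEdges (hm : Even m) (hn : Even n) :
    IsBipartition (fun x : Vtx m n => (-1) ^ (x.1.val + x.2.val)) (honeyEdges m n) := by
  have hval {k l : ℕ} (h : Even l ↔ ¬ Even k) : (-1 : ℤˣ) ^ l = -(-1) ^ k := by
    by_cases hk : Even k
    · rw [hk.neg_one_pow, (Nat.not_even_iff_odd.1 (mt h.1 (not_not_intro hk))).neg_one_pow]
    · rw [(h.2 hk).neg_one_pow, (Nat.not_even_iff_odd.1 hk).neg_one_pow, neg_neg]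
  rintro ⟨i, j⟩ ⟨k, l⟩ h
  simp only [mem_honeyEdges, HoneyAdj] at h
  rcases h with ⟨rfl, rfl | rfl⟩ | ⟨rfl, ⟨rfl, -⟩ | ⟨rfl, -⟩⟩
  · exact hval (even_val_succ_add hm i j)
  · exact neg_eq_iff_eq_neg.1 (hval (even_val_succ_add hm k j)).symm
  · exact hval (even_val_add_succ hn i j)
  · exact neg_eq_iff_eq_neg.1 (hval (even_val_add_succ hn i l)).symm

lemma nbrs_honeyEdges (hn : Even n) (i : ZMod m) (j : ZMod n) :
    nbrs (honeyEdges m n) (i, j) =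
      {(i + 1, j), (i - 1, j), (i, if Even (i.val + j.val) then j + 1 else j - 1)} := by
  ext ⟨k, l⟩
  have hparity : j = l + 1 → (Even (i.val + j.val) ↔ ¬ Even (i.val + l.val)) := by
    rintro rfl; exact even_val_add_succ hn i l
  simp only [mem_nbrs, mem_honeyEdges, HoneyAdj, mem_insert, mem_singleton, Prod.mk.injEq,
    eq_sub_iff_add_eq]
  split_ifs <;> grind

lemma isCubic_honeyEdges (hm : Even m) (hn : Even n) (hm4 : 4 ≤ m) (hn4 : 4 ≤ n) :
    IsCubic (honeyEdges m n) where
  loopless x hx := units_ne_neg_self _ (isBipartition_honeyEdges hm hn x x hx)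
  deg_eq := by
    rintro ⟨i, j⟩
    have : Fact (1 < n) := ⟨by omega⟩
    have hvert : (if Even (i.val + j.val) then j + 1 else j - 1) ≠ j := by split_ifs <;> simp
    have : Fact (2 < m) := ⟨by omega⟩
    have hhor : i + 1 ≠ i - 1 := fun h => ZMod.neg_one_ne_one (by linear_combination -h)
    rw [← card_nbrs, nbrs_honeyEdges hn]
    refine card_eq_three.2 ⟨_, _, _, ?_, ?_, ?_, rfl⟩
    · exact fun h => hhor (congrArg Prod.fst h)
    · exact fun h => hvert (congrArg Prod.snd h).symm
    · exact fun h => hvert (congrArg Prod.snd h).symm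

lemma preconnected_honeyEdges (hm : Even m) :
    (SimpleGraph.fromEdgeSet (honeyEdges m n : Set (Sym2 (Vtx m n)))).Preconnected := by
  set G := SimpleGraph.fromEdgeSet (honeyEdges m n : Set (Sym2 (Vtx m n)))
  have hadj {x y : Vtx m n} (h : HoneyAdj m n x y) : G.Reachable x y := by
    by_cases hxy : x = y
    · exact hxy ▸ .rfl
    · exact SimpleGraph.Adj.reachable
        ((SimpleGraph.fromEdgeSet_adj _).2 ⟨mem_honeyEdges.2 h, hxy⟩)
  have hrow (x : Vtx m n) (i i' : ZMod m) (j : ZMod n) (h : G.Reachable x (i, j)) :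
      G.Reachable x (i', j) :=
    zmod_induction (p := fun a => G.Reachable x (a, j))
      (fun a ha => ha.trans (hadj (honeyAdj_right a j))) h i'
  have hcol (x : Vtx m n) (i : ZMod m) (j : ZMod n) (h : G.Reachable x (i, j)) :
      G.Reachable x (i, j + 1) := by
    by_cases heven : Even (i.val + j.val)
    · exact h.trans (hadj (honeyAdj_up heven))
    · exact hrow x (i + 1) i (j + 1) ((hrow x i (i + 1) j h).trans
        (hadj (honeyAdj_up ((even_val_succ_add hm i j).2 heven))))
  rintro ⟨i, j⟩ ⟨i', j'⟩
  exact zmod_induction (p := fun b => G.Reachable (i, j) (i', b)) (fun b hb => hcol _ _ _ hb)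
    (hrow _ i i' j .rfl) j'

end Honeycomb
section Transition

open Finset

variable {V : Type*} [DecidableEq V] {E A B : Finset (Sym2 V)} {u v a b : V}

lemma defectMove_iff_of_deg_eq_three (hE : IsCubic E) (hA : A ⊆ E)
    (hu : deg A u = 3) :
    DefectMove E (A, u, v) (B, a, b) ↔
      ∃ w, s(u, w) ∈ E ∧ s(u, w) ∈ A ∧ B = A.erase s(u, w) ∧ a = w ∧ b = v := by
  refine exists_congr fun w => ?_
  simp only [CanCross, Marked.cross, hu, true_or, and_true, Prod.mk.injEq]
  refine and_congr_right fun hw => ?_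
  have hwA := hE.mem_of_deg_eq_three hA hu hw
  simp only [hwA, symmDiff_singleton_of_mem, true_and]

lemma defectMove_iff_of_deg_ne_three (hu : deg A u ≠ 3) :
    DefectMove E (A, u, v) (B, a, b) ↔
      ∃ w, s(u, w) ∈ E ∧ s(u, w) ∉ A ∧ B = insert s(u, w) A ∧ a = w ∧ b = v := by
  refine exists_congr fun w => ?_
  simp only [CanCross, Marked.cross, hu, false_or, Prod.mk.injEq, and_assoc]
  refine and_congr_right fun _ => and_congr_right fun hw => ?_
  rw [symmDiff_singleton_of_notMem hw]

lemma moveProb_of_ne (hE : IsCubic E) (hp : IsWorm E (A, u, v)) (huv : u ≠ v) :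
    moveProb E (A, u, v) (B, a, b) =
      (if deg A u = 3 ∧ ∃ w, s(u, w) ∈ E ∧ s(u, w) ∈ A ∧ B = A.erase s(u, w) ∧ a = w ∧ b = v
        then 1 / 6 else 0) +
      (if deg A u = 1 ∧ ∃ w, s(u, w) ∈ E ∧ s(u, w) ∉ A ∧ B = insert s(u, w) A ∧ a = w ∧ b = v
        then 1 / 4 else 0) := by
  rcases hp.deg_fst hE huv with hu | hu
  · rw [moveProb, moveRate_of_deg_eq_one hu, defectMove_iff_of_deg_ne_three (by omega)]
    simp only [hu, OfNat.one_ne_ofNat, false_and, if_false, true_and, zero_add]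
  · rw [moveProb, moveRate_of_deg_ne_one (by omega), defectMove_iff_of_deg_eq_three hE hp.1 hu]
    simp only [hu, OfNat.ofNat_ne_one, false_and, if_false, true_and, add_zero]

lemma moveProb_add_swap_of_eq (hE : IsCubic E) (hp : IsWorm E (A, v, v)) :
    moveProb E (A, v, v) (B, a, b) + moveProb E (A, v, v) (B, b, a) =
      if ∃ w, s(v, w) ∈ E ∧ s(v, w) ∉ A ∧ B = insert s(v, w) A ∧
        ((a = w ∧ b = v) ∨ (a = v ∧ b = w)) then 1 / 6 else 0 := by
  have heven := hp.even_deg (x := v) fun _ => rfl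
  have hdeg1 : deg A v ≠ 1 := fun h => absurd (h ▸ heven) (by decide)
  have hdeg3 : deg A v ≠ 3 := fun h => absurd (h ▸ heven) (by decide)
  have hexcl : ¬ (DefectMove E (A, v, v) (B, a, b) ∧ DefectMove E (A, v, v) (B, b, a)) := by
    simp only [defectMove_iff_of_deg_ne_three hdeg3]
    rintro ⟨⟨w, hw, -, -, rfl, rfl⟩, -, -, -, -, -, rfl⟩
    exact hE.loopless _ hw
  have hor : (∃ w, s(v, w) ∈ E ∧ s(v, w) ∉ A ∧ B = insert s(v, w) A ∧
        ((a = w ∧ b = v) ∨ (a = v ∧ b = w))) ↔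
      DefectMove E (A, v, v) (B, a, b) ∨ DefectMove E (A, v, v) (B, b, a) := by
    simp only [defectMove_iff_of_deg_ne_three hdeg3, ← exists_or, ← and_or_left,
      and_comm (a := a = v)]
  rw [moveProb, moveProb, moveRate_of_deg_ne_one hdeg1, if_congr hor rfl rfl]
  split_ifs <;> first | tauto | norm_num

theorem Pinf_eq_wormMatrix {m n : ℕ} [NeZero m] [NeZero n] (hE : IsCubic (honeyEdges m n)) :
    Pinf m n = wormMatrix (honeyEdges m n) := by
  ext ⟨⟨A, u, v⟩, hs⟩ ⟨⟨B, a, b⟩, ht⟩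
  have hs : IsWorm (honeyEdges m n) (A, u, v) := hs
  rcases eq_or_ne u v with rfl | huv
  · simp only [Pinf, wormMatrix, Marked.swap, ← mem_honeyEdges, if_true, add_assoc,
      moveProb_add_swap_of_eq hE hs, and_true]
    congr
  · simp only [Pinf, wormMatrix, Marked.swap, ← mem_honeyEdges, huv, if_false,
      moveProb_of_ne hE hs huv, moveProb_of_ne hE hs.swap huv.symm, and_comm (a := a = u),
      and_false, zero_add, add_assoc]
    congr

end Transition

theorem uniform_prop (m n : ℕ) [NeZero m] [NeZero n]
    (hm : Even m) (hn : Even n) (hm4 : 4 ≤ m) (hn4 : 4 ≤ n)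
    (ν : WormState m n → ℝ) (hν0 : ∀ st, 0 ≤ ν st) (hν1 : ∑ st : WormState m n, ν st = 1)
    (hstat : ∀ tt : WormState m n, ∑ st : WormState m n, ν st * Pinf m n st tt = ν tt) :
    ∃ lam : ℝ, 0 < lam ∧
      (∀ st : WormState m n, (∀ x, bdeg m n st.1.1 x = 2) → st.1.2.1 = st.1.2.2 →
        ν st = lam) ∧
      (∀ st : WormState m n, (∀ x, bdeg m n st.1.1 x = 2) → st.1.2.1 = st.1.2.2 →
        ν st / (∑ tt ∈ Finset.univ.filter (fun tt : WormState m n =>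
            (∀ x, bdeg m n tt.1.1 x = 2) ∧ tt.1.2.1 = tt.1.2.2), ν tt)
          = 1 / ((Fintype.card (Vtx m n) : ℝ) *
              ((Finset.univ.filter (fun A : Finset (Sym2 (Vtx m n)) =>
                A ⊆ honeyEdges m n ∧ ∀ x, bdeg m n A x = 2)).card : ℝ))) := by
  have hE := isCubic_honeyEdges hm hn hm4 hn4
  obtain ⟨lam, hlam, hν, hratio⟩ := uniform_prop_general hE (isBipartition_honeyEdges hm hn)
    (preconnected_honeyEdges hm) hν0 hν1 (Pinf_eq_wormMatrix hE ▸ funext hstat)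
  exact ⟨lam, hlam, fun st hdeg huv => hν st ⟨hdeg, huv⟩,
    fun st hdeg huv => hratio st ⟨hdeg, huv⟩⟩

end FPL
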